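/- (Sinai's theorem, in the generality noted in the paper's conclusion.) Let f be an expansive homeomorphism of the compact metric space M with expansivity constant ρ, having the shadowing property. Then for every β > 0 there exist ε with 0 < ε ≤ ρ/4 and δ > 0 such that W^s_ε(x) ∩ W^u_ε(y) consists of exactly one point [x, y] whenever dist(x, y) < δ, together with a Markov partition R_1, …, R_m of M for f (with respect to these ε and δ) in which every R_i has diameter less than β. -/

import Mathlib

open Set Filter Metric Topology

variable {M : Type*} [MetricSpace M] [CompactSpace M]

/-- `f` is expansive with expansivity constant `ρ`: if two orbits stay `ρ`-close for all
integer times, the points coincide. -/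
def IsExpansiveWith (f : Equiv.Perm M) (ρ : ℝ) : Prop :=
  ∀ x y : M, (∀ n : ℤ, dist ((f ^ n) x) ((f ^ n) y) ≤ ρ) → x = y

/-- The stable set `W^s(x)`. -/
def stableSet (f : Equiv.Perm M) (x : M) : Set M :=
  {y : M | Tendsto (fun n : ℤ => dist ((f ^ n) x) ((f ^ n) y)) atTop (𝓝 0)}

/-- The unstable set `W^u(x)`. -/
def unstableSet (f : Equiv.Perm M) (x : M) : Set M :=
  {y : M | Tendsto (fun n : ℤ => dist ((f ^ n) x) ((f ^ n) y)) atBot (𝓝 0)}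

/-- The `ε`-stable set `W^s_ε(x)`. -/
def epsStable (f : Equiv.Perm M) (ε : ℝ) (x : M) : Set M :=
  {y : M | ∀ n : ℤ, 0 ≤ n → dist ((f ^ n) x) ((f ^ n) y) ≤ ε}

/-- The `ε`-unstable set `W^u_ε(x)`. -/
def epsUnstable (f : Equiv.Perm M) (ε : ℝ) (x : M) : Set M :=
  {y : M | ∀ n : ℤ, n ≤ 0 → dist ((f ^ n) x) ((f ^ n) y) ≤ ε}

/-- Shadowing property: every `δ`-pseudo-orbit is `ε`-shadowed by a true orbit. -/
def HasShadowing (f : Equiv.Perm M) : Prop :=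
  ∀ ε : ℝ, 0 < ε → ∃ δ : ℝ, 0 < δ ∧ ∀ y : ℤ → M,
    (∀ n : ℤ, dist (f (y n)) (y (n + 1)) < δ) →
      ∃ z : M, ∀ n : ℤ, dist ((f ^ n) z) (y n) ≤ ε

/-- A rectangle: a nonempty set of diameter `< δ` closed under the bracket operation. -/
def IsRectangle (δ : ℝ) (br : M → M → M) (R : Set M) : Prop :=
  R.Nonempty ∧ Metric.diam R < δ ∧ ∀ x ∈ R, ∀ y ∈ R, br x y ∈ R

/-- Stable border `∂^s R`: points of `R` that are not interior points of
`W^u(x,R) = W^u_ε(x) ∩ R` in the subspace topology of `W^u_ε(x)`. -/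
def stableBorder (f : Equiv.Perm M) (ε : ℝ) (R : Set M) : Set M :=
  {x : M | x ∈ R ∧ ¬ ∃ U : Set M, IsOpen U ∧ x ∈ U ∧ U ∩ epsUnstable f ε x ⊆ R}

/-- Unstable border `∂^u R`: points of `R` that are not interior points of
`W^s(x,R) = W^s_ε(x) ∩ R` in the subspace topology of `W^s_ε(x)`. -/
def unstableBorder (f : Equiv.Perm M) (ε : ℝ) (R : Set M) : Set M :=
  {x : M | x ∈ R ∧ ¬ ∃ U : Set M, IsOpen U ∧ x ∈ U ∧ U ∩ epsStable f ε x ⊆ R}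

/-- A Markov partition: a finite family of proper rectangles covering `M`, with pairwise
disjoint interiors, satisfying the Markov inclusions for the invariant fibers. -/
def IsMarkovPartition (f : Equiv.Perm M) (ε δ : ℝ) (br : M → M → M) {m : ℕ}
    (R : Fin m → Set M) : Prop :=
  (∀ i, IsRectangle δ br (R i)) ∧
  (∀ i, R i = closure (interior (R i))) ∧
  (⋃ i, R i) = Set.univ ∧
  (∀ i j, i ≠ j → interior (R i) ∩ interior (R j) = ∅) ∧
  ∀ i j, ∀ x ∈ interior (R i) ∩ ⇑f ⁻¹' interior (R j),
    ⇑f '' (epsStable f ε x ∩ R i) ⊆ epsStable f ε (f x) ∩ R j ∧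
    epsUnstable f ε (f x) ∩ R j ⊆ ⇑f '' (epsUnstable f ε x ∩ R i)


set_option linter.unusedSectionVars false

/-- Local product structure, in a form symmetric under time reversal. -/
structure LocP (f g : M → M) (S U : M → M → Prop) (δ : ℝ) (br : M → M → M) : Prop where
  cf : Continuous f
  cg : Continuous g
  gf : ∀ x, g (f x) = x
  fg : ∀ x, f (g x) = x
  Srefl : ∀ x, S x x
  Urefl : ∀ x, U x x
  Ssymm : ∀ x y, S x y → S y x
  Usymm : ∀ x y, U x y → U y x
  Strans : ∀ x y z, dist x z < δ → S x y → S y z → S x z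
  Utrans : ∀ x y z, dist x z < δ → U x y → U y z → U x z
  brS : ∀ x y, dist x y < δ → S x (br x y)
  brU : ∀ x y, dist x y < δ → U (br x y) y
  uniq : ∀ x y z, dist x y < δ → S x z → U z y → z = br x y
  cont : ∀ x y, dist x y < δ → ContinuousAt (fun p : M × M => br p.1 p.2) (x, y)
  Scl : IsClosed {p : M × M | S p.1 p.2}
  Ucl : IsClosed {p : M × M | U p.1 p.2}
  Sf : ∀ x y, S x y → S (f x) (f y)
  Ug : ∀ x y, U x y → U (g x) (g y)
  Sg : ∀ x y, S x y → dist (g x) (g y) < δ → S (g x) (g y)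
  Uf : ∀ x y, U x y → dist (f x) (f y) < δ → U (f x) (f y)

theorem LocP.dual {f g : M → M} {S U : M → M → Prop} {δ : ℝ} {br : M → M → M}
    (L : LocP f g S U δ br) : LocP g f U S δ (fun x y => br y x) where
  cf := L.cg
  cg := L.cf
  gf := L.fg
  fg := L.gf
  Srefl := L.Urefl
  Urefl := L.Srefl
  Ssymm := L.Usymm
  Usymm := L.Ssymm
  Strans := L.Utrans
  Utrans := L.Strans
  brS := fun x y h => L.Usymm _ _ (L.brU y x (by rwa [dist_comm]))
  brU := fun x y h => L.Ssymm _ _ (L.brS y x (by rwa [dist_comm]))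
  uniq := fun x y z h h1 h2 =>
    L.uniq y x z (by rwa [dist_comm]) (L.Ssymm _ _ h2) (L.Usymm _ _ h1)
  cont := fun x y h => by
    have h1 := L.cont y x (by rwa [dist_comm])
    exact ContinuousAt.comp (g := fun p : M × M => br p.1 p.2) (f := Prod.swap) (x := (x, y))
      h1 continuous_swap.continuousAt
  Scl := L.Ucl
  Ucl := L.Scl
  Sf := L.Ug
  Ug := L.Sf
  Sg := L.Uf
  Uf := L.Sg

/-- A Markov cover. -/
structure CovP {ι : Type*} (f g : M → M) (S U : M → M → Prop) (δ : ℝ) (br : M → M → M)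
    (T : ι → Set M) (E : ι → ι → Set M) : Prop where
  Tcl : ∀ i, IsClosed (T i)
  cover : ∀ x, ∃ i, x ∈ T i
  small : ∀ i, ∀ x ∈ T i, ∀ y ∈ T i, dist x y < δ / 2
  rect : ∀ i, ∀ x ∈ T i, ∀ y ∈ T i, br x y ∈ T i
  memT : ∀ i x, x ∈ T i ↔ ∃ j, x ∈ E i j
  memfT : ∀ j x, f x ∈ T j ↔ ∃ i, x ∈ E i j
  ES : ∀ i j x y, x ∈ E i j → y ∈ T i → S x y → y ∈ E i j
  EU : ∀ i j x y, x ∈ E i j → f y ∈ T j → U (f x) (f y) → y ∈ E i j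

theorem CovP.dual {ι : Type*} {f g : M → M} {S U : M → M → Prop} {δ : ℝ} {br : M → M → M}
    {T : ι → Set M} {E : ι → ι → Set M}
    (L : LocP f g S U δ br) (C : CovP f g S U δ br T E) :
    CovP g f U S δ (fun x y => br y x) T (fun j i => {x | g x ∈ E i j}) where
  Tcl := C.Tcl
  cover := C.cover
  small := C.small
  rect := fun i x hx y hy => C.rect i y hy x hx
  memT := fun j x => by
    have := C.memfT j (g x)
    rwa [L.fg] at this
  memfT := fun i x => C.memT i (g x)
  ES := fun j i x y hx hy h => C.EU i j (g x) (g y) hx (by rwa [L.fg]) (by rwa [L.fg, L.fg])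
  EU := fun j i x y hx hy h => C.ES i j (g x) (g y) hx hy h

/-- points of `T j` whose `U`-fiber in `T j` meets `T k`. -/
def typA {ι : Type*} (U : M → M → Prop) (T : ι → Set M) (j k : ι) : Set M :=
  {x | x ∈ T j ∧ ∃ z, z ∈ T j ∧ z ∈ T k ∧ U x z}

/-- same types. -/
def eqv {ι : Type*} (S U : M → M → Prop) (T : ι → Set M) (x y : M) : Prop :=
  (∀ j k, x ∈ typA U T j k ↔ y ∈ typA U T j k) ∧ (∀ j k, x ∈ typA S T j k ↔ y ∈ typA S T j k)

theorem eqv.symm' {ι : Type*} {S U : M → M → Prop} {T : ι → Set M} {x y : M}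
    (h : eqv S U T x y) : eqv S U T y x := ⟨fun j k => (h.1 j k).symm, fun j k => (h.2 j k).symm⟩

theorem eqv.trans' {ι : Type*} {S U : M → M → Prop} {T : ι → Set M} {x y z : M}
    (h : eqv S U T x y) (h' : eqv S U T y z) : eqv S U T x z :=
  ⟨fun j k => (h.1 j k).trans (h'.1 j k), fun j k => (h.2 j k).trans (h'.2 j k)⟩

section abs
variable {ι : Type*} {f g : M → M} {S U : M → M → Prop} {δ : ℝ} {br : M → M → M}
    {T : ι → Set M} {E : ι → ι → Set M}

theorem CovP.sm (C : CovP f g S U δ br T E) {i : ι} {x y : M} (hx : x ∈ T i) (hy : y ∈ T i) :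
    dist x y < δ := by
  have h1 := C.small i x hx y hy
  have h2 := C.small i x hx x hx
  rw [dist_self] at h2
  linarith

theorem typA_closed (L : LocP f g S U δ br) (C : CovP f g S U δ br T E) (j k : ι) :
    IsClosed (typA U T j k) := by
  have h1 : IsClosed {p : M × M | p.2 ∈ T j ∧ p.2 ∈ T k ∧ U p.1 p.2} :=
    ((C.Tcl j).preimage continuous_snd).inter (((C.Tcl k).preimage continuous_snd).inter L.Ucl)
  have h2 := isClosedMap_fst_of_compactSpace _ h1
  have : typA U T j k = T j ∩ (Prod.fst '' {p : M × M | p.2 ∈ T j ∧ p.2 ∈ T k ∧ U p.1 p.2}) := by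
    ext x
    simp [typA]
  rw [this]
  exact (C.Tcl j).inter h2

theorem typA_self (L : LocP f g S U δ br) (j : ι) (x : M) : x ∈ typA U T j j ↔ x ∈ T j :=
  ⟨fun h => h.1, fun h => ⟨h, x, h, h, L.Urefl x⟩⟩

theorem eqv_T (L : LocP f g S U δ br) {x y : M} (h : eqv S U T x y) (j : ι) :
    x ∈ T j ↔ y ∈ T j := by
  rw [← typA_self L (T := T) j x, ← typA_self L (T := T) j y]; exact h.1 j j

theorem eqv_dist (L : LocP f g S U δ br) (C : CovP f g S U δ br T E) {x y : M}
    (h : eqv S U T x y) : dist x y < δ := by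
  obtain ⟨j, hj⟩ := C.cover x
  exact C.sm hj ((eqv_T L h j).1 hj)

/-- classes are closed under brackets. -/
theorem eqv_br (L : LocP f g S U δ br) (C : CovP f g S U δ br T E) {x y : M}
    (h : eqv S U T x y) : eqv S U T (br x y) x := by
  have hd := eqv_dist L C h
  have hS := L.brS x y hd
  have hU := L.brU x y hd
  have hT : ∀ j, br x y ∈ T j ↔ x ∈ T j := by
    intro j
    constructor
    · intro hw
      obtain ⟨i, hi⟩ := C.cover x
      have hyi := (eqv_T L h i).1 hi
      have hwi := C.rect i x hi y hyi
      have hA : y ∈ typA U T i j := ⟨hyi, _, hwi, hw, L.Usymm _ _ hU⟩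
      obtain ⟨_, b, hbi, hbj, hb⟩ := (h.1 i j).2 hA
      have := L.uniq (br x y) b x (C.sm hwi hbi) (L.Ssymm _ _ hS) hb
      rw [this]
      exact C.rect j _ hw _ hbj
    · intro hx
      exact C.rect j x hx y ((eqv_T L h j).1 hx)
  constructor
  · intro j k
    rw [h.1 j k]
    constructor
    · rintro ⟨hw, z, hzj, hzk, hz⟩
      have hy := (eqv_T L h j).1 ((hT j).1 hw)
      exact ⟨hy, z, hzj, hzk, L.Utrans _ _ _ (C.sm hy hzj) (L.Usymm _ _ hU) hz⟩
    · rintro ⟨hy, z, hzj, hzk, hz⟩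
      have hw := (hT j).2 ((eqv_T L h j).2 hy)
      exact ⟨hw, z, hzj, hzk, L.Utrans _ _ _ (C.sm hw hzj) hU hz⟩
  · intro j k
    constructor
    · rintro ⟨hw, z, hzj, hzk, hz⟩
      have hx := (hT j).1 hw
      exact ⟨hx, z, hzj, hzk, L.Strans _ _ _ (C.sm hx hzj) hS hz⟩
    · rintro ⟨hx, z, hzj, hzk, hz⟩
      have hw := (hT j).2 hx
      exact ⟨hw, z, hzj, hzk, L.Strans _ _ _ (C.sm hw hzj) (L.Ssymm _ _ hS) hz⟩

theorem eqv_f_aux (L : LocP f g S U δ br) (C : CovP f g S U δ br T E) {x y : M}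
    (h : eqv S U T x y) (hs : S x y) :
    (∀ j k, f x ∈ typA U T j k → f y ∈ typA U T j k) ∧
    (∀ j k, f x ∈ typA S T j k → f y ∈ typA S T j k) := by
  have hE : ∀ i j, x ∈ E i j → y ∈ E i j := fun i j hx =>
    C.ES i j x y hx ((eqv_T L h i).1 ((C.memT i x).2 ⟨j, hx⟩)) hs
  constructor
  · rintro j k ⟨hx, w, hwj, hwk, hw⟩
    obtain ⟨z, rfl⟩ : ∃ z, f z = w := ⟨g w, L.fg w⟩
    obtain ⟨s, hs'⟩ := (C.memfT j x).1 hx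
    have hyE := hE s j hs'
    have hy : f y ∈ T j := (C.memfT j y).2 ⟨s, hyE⟩
    have hzE := C.EU s j x z hs' hwj hw
    obtain ⟨t, ht⟩ := (C.memfT k z).1 hwk
    have hxs : x ∈ T s := (C.memT _ _).2 ⟨_, hs'⟩
    have hzs : z ∈ T s := (C.memT _ _).2 ⟨_, hzE⟩
    have hzt : z ∈ T t := (C.memT _ _).2 ⟨_, ht⟩
    have hxz : U x z := by
      have := L.Ug _ _ hw
      rwa [L.gf, L.gf] at this
    obtain ⟨hys, z', hz's, hz't, hz'⟩ := (h.1 s t).1 ⟨hxs, z, hzs, hzt, hxz⟩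
    have hd := C.sm hzs hz's
    have h1 := L.brS z z' hd
    have h2 := L.brU z z' hd
    have h3 := C.rect s z hzs z' hz's
    have h4 := C.rect t z hzt z' hz't
    have h5 : f (br z z') ∈ T k := (C.memfT _ _).2 ⟨t, C.ES t k z _ ht h4 h1⟩
    have h6 : U (br z z') y := L.Utrans _ _ _ (C.sm h3 hys) h2 (L.Usymm _ _ hz')
    have hdd : dist (f (br z z')) (f y) < δ := by
      have a := C.small k _ h5 _ hwk
      have b := C.small j _ hwj _ hy
      have := dist_triangle (f (br z z')) (f z) (f y)
      linarith
    have h7 := L.Uf _ _ h6 hdd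
    have h8 := L.uniq (f z) (f y) _ (C.sm hwj hy) (L.Sf _ _ h1) h7
    have h9 : f (br z z') ∈ T j := by
      rw [h8]; exact C.rect j _ hwj _ hy
    exact ⟨hy, _, h9, h5, L.Usymm _ _ h7⟩
  · rintro j k ⟨hx, w, hwj, hwk, hw⟩
    obtain ⟨s, hs'⟩ := (C.memfT j x).1 hx
    have hy : f y ∈ T j := (C.memfT j y).2 ⟨s, hE s j hs'⟩
    exact ⟨hy, w, hwj, hwk, L.Strans _ _ _ (C.sm hy hwj) (L.Ssymm _ _ (L.Sf _ _ hs)) hw⟩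

theorem eqv_f (L : LocP f g S U δ br) (C : CovP f g S U δ br T E) {x y : M}
    (h : eqv S U T x y) (hs : S x y) : eqv S U T (f x) (f y) := by
  have h1 := eqv_f_aux L C h hs
  have h2 := eqv_f_aux L C h.symm' (L.Ssymm _ _ hs)
  exact ⟨fun j k => ⟨h1.1 j k, h2.1 j k⟩, fun j k => ⟨h1.2 j k, h2.2 j k⟩⟩

/-- open cell of the class of `p`. -/
def cell (S U : M → M → Prop) (T : ι → Set M) (p : M) : Set M :=
  interior {x | eqv S U T x p}

theorem cell_eqv {p x : M} (hx : x ∈ cell S U T p) : eqv S U T x p := interior_subset (s := {x | eqv S U T x p}) hx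

theorem cell_nhds {p x : M} : x ∈ cell S U T p ↔ ∀ᶠ y in 𝓝 x, eqv S U T y p :=
  mem_interior_iff_mem_nhds

theorem cell_open (p : M) : IsOpen (cell S U T p) := isOpen_interior

theorem cell_br (L : LocP f g S U δ br) (C : CovP f g S U δ br T E) {p x y : M}
    (hx : x ∈ cell S U T p) (hy : y ∈ cell S U T p) : br x y ∈ cell S U T p := by
  have hxy : eqv S U T x y := (cell_eqv hx).trans' (cell_eqv hy).symm'
  have hd := eqv_dist L C hxy
  have hS := L.brS x y hd
  have hU := L.brU x y hd
  have hz := eqv_br L C hxy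
  set z := br x y with hzdef
  have hzx := eqv_dist L C hz
  have hyz := eqv_dist L C (hxy.symm'.trans' hz.symm')
  have e1 : br z x = x := (L.uniq z x x hzx (L.Ssymm _ _ hS) (L.Urefl _)).symm
  have e2 : br y z = y := (L.uniq y z y hyz (L.Srefl _) (L.Usymm _ _ hU)).symm
  rw [cell_nhds]
  have c1 : Tendsto (fun v => br v x) (𝓝 z) (𝓝 x) := by
    have := (L.cont z x hzx).tendsto.comp
      ((continuous_id.prodMk continuous_const).tendsto z : Tendsto (fun v : M => (v, x)) _ _)
    simpa [Function.comp_def, e1] using this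
  have c2 : Tendsto (fun v => br y v) (𝓝 z) (𝓝 y) := by
    have := (L.cont y z hyz).tendsto.comp
      ((continuous_const.prodMk continuous_id).tendsto z : Tendsto (fun v : M => (y, v)) _ _)
    simpa [Function.comp_def, e2] using this
  have d1 : ∀ᶠ v in 𝓝 z, dist v x < δ :=
    (continuous_id.dist continuous_const).continuousAt.eventually_lt_const hzx
  have d2 : ∀ᶠ v in 𝓝 z, dist y v < δ :=
    (continuous_const.dist continuous_id).continuousAt.eventually_lt_const hyz
  filter_upwards [c1.eventually (cell_nhds.1 hx), c2.eventually (cell_nhds.1 hy), d1, d2]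
    with v h1 h2 h3 h4
  have h12 := h1.trans' h2.symm'
  have := L.uniq (br v x) (br y v) v (eqv_dist L C h12) (L.Ssymm _ _ (L.brS _ _ h3))
    (L.Usymm _ _ (L.brU _ _ h4))
  have h5 := eqv_br L C h12
  rw [← this] at h5
  exact h5.trans' h1

theorem cell_f (L : LocP f g S U δ br) (C : CovP f g S U δ br T E) {p q x v : M}
    (hx : x ∈ cell S U T p) (hfx : f x ∈ cell S U T q) (hv : v ∈ cell S U T p) (hs : S x v) :
    f v ∈ cell S U T q := by
  have hvx : eqv S U T v x := (cell_eqv hv).trans' (cell_eqv hx).symm'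
  have hd := eqv_dist L C hvx
  have e1 : br v x = x := (L.uniq v x x hd (L.Ssymm _ _ hs) (L.Urefl _)).symm
  have c1 : Tendsto (fun w => br w x) (𝓝 v) (𝓝 x) := by
    have := (L.cont v x hd).tendsto.comp
      ((continuous_id.prodMk continuous_const).tendsto v : Tendsto (fun w : M => (w, x)) _ _)
    simpa [Function.comp_def, e1] using this
  have d1 : ∀ᶠ w in 𝓝 v, dist w x < δ :=
    (continuous_id.dist continuous_const).continuousAt.eventually_lt_const hd
  have key : ∀ᶠ w in 𝓝 v, eqv S U T (f w) q := by
    filter_upwards [c1.eventually (cell_nhds.1 hx), d1, cell_nhds.1 hv,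
      c1.eventually (L.cf.continuousAt.eventually (cell_nhds.1 hfx))] with w h1 h2 h3 h4
    exact (eqv_f L C (h3.trans' h1.symm') (L.brS _ _ h2)).trans' h4
  rw [cell_nhds]
  have c2 : Tendsto g (𝓝 (f v)) (𝓝 v) := by
    have := L.cg.tendsto (f v)
    rwa [L.gf] at this
  filter_upwards [c2.eventually key] with w hw
  rwa [L.fg] at hw

theorem ccell_T (L : LocP f g S U δ br) (C : CovP f g S U δ br T E) (p : M) :
    ∃ j, closure (cell S U T p) ⊆ T j := by
  obtain ⟨j, hj⟩ := C.cover p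
  refine ⟨j, closure_minimal (fun x hx => ?_) (C.Tcl j)⟩
  exact (eqv_T L (cell_eqv hx) j).2 hj

theorem ccell_br (L : LocP f g S U δ br) (C : CovP f g S U δ br T E) {p x y : M}
    (hx : x ∈ closure (cell S U T p)) (hy : y ∈ closure (cell S U T p)) :
    br x y ∈ closure (cell S U T p) := by
  obtain ⟨j, hj⟩ := ccell_T L C p
  have hd : dist x y < δ := C.sm (hj hx) (hj hy)
  have : (x, y) ∈ closure (cell S U T p ×ˢ cell S U T p) := by
    rw [closure_prod_eq]; exact ⟨hx, hy⟩
  refine closure_mono ?_ ((L.cont x y hd).continuousWithinAt.mem_closure_image this)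
  rintro _ ⟨⟨a, b⟩, ⟨ha, hb⟩, rfl⟩
  exact cell_br L C ha hb

/-- The first Markov inclusion. -/
theorem ccell_f (L : LocP f g S U δ br) (C : CovP f g S U δ br T E) {p q x y : M}
    (hx : x ∈ interior (closure (cell S U T p)))
    (hfx : f x ∈ interior (closure (cell S U T q)))
    (hy : y ∈ closure (cell S U T p)) (hs : S x y) : f y ∈ closure (cell S U T q) := by
  obtain ⟨j, hj⟩ := ccell_T L C p
  have step1 : ∀ x y, x ∈ cell S U T p → f x ∈ cell S U T q → y ∈ closure (cell S U T p) →
      S x y → f y ∈ closure (cell S U T q) := by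
    intro x y hx hfx hy hs
    have hd : dist x y < δ := C.sm (hj (subset_closure hx)) (hj hy)
    have e : br x y = y := (L.uniq x y y hd hs (L.Urefl _)).symm
    have c : ContinuousAt (fun v => f (br x v)) y := by
      have h1 : ContinuousAt (fun v : M => (x, v)) y :=
        (continuous_const.prodMk continuous_id).continuousAt
      have h2 : ContinuousAt (fun v => br x v) y :=
        ContinuousAt.comp (g := fun p : M × M => br p.1 p.2) (L.cont x y hd) h1
      exact L.cf.continuousAt.comp h2
    have := c.continuousWithinAt.mem_closure_image hy
    simp only [e] at this
    refine closure_mono ?_ this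
    rintro _ ⟨v, hv, rfl⟩
    have hd' : dist x v < δ := C.sm (hj (subset_closure hx)) (hj (subset_closure hv))
    exact cell_f L C hx hfx (cell_br L C hx hv) (L.brS _ _ hd')
  have hxc := interior_subset hx
  have hd : dist x y < δ := C.sm (hj hxc) (hj hy)
  have e : br x y = y := (L.uniq x y y hd hs (L.Urefl _)).symm
  have c : ContinuousAt (fun v => f (br v y)) x := by
    have h1 : ContinuousAt (fun v : M => (v, y)) x :=
      (continuous_id.prodMk continuous_const).continuousAt
    have h2 : ContinuousAt (fun v => br v y) x :=
      ContinuousAt.comp (g := fun p : M × M => br p.1 p.2) (f := fun v : M => (v, y))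
        (L.cont x y hd) h1
    exact ContinuousAt.comp (g := f) L.cf.continuousAt h2
  have hxx : x ∈ closure (cell S U T p ∩ f ⁻¹' cell S U T q) := by
    rw [_root_.mem_closure_iff]
    intro O hO hxO
    obtain ⟨a, ⟨⟨haO, haq⟩, hap⟩⟩ := _root_.mem_closure_iff.1 hxc (O ∩ f ⁻¹' interior (closure (cell S U T q)))
      (hO.inter (isOpen_interior.preimage L.cf)) ⟨hxO, hfx⟩
    have hO2 : IsOpen (g ⁻¹' (O ∩ cell S U T p)) := (hO.inter (cell_open p)).preimage L.cg
    obtain ⟨b, hb1, hb2⟩ := _root_.mem_closure_iff.1 (interior_subset haq) _ hO2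
      (by simp only [mem_preimage, L.gf]; exact ⟨haO, hap⟩)
    exact ⟨g b, hb1.1, hb1.2, by simpa only [mem_preimage, L.fg] using hb2⟩
  have := c.continuousWithinAt.mem_closure_image hxx
  simp only [e] at this
  refine closure_minimal ?_ isClosed_closure this
  rintro _ ⟨v, ⟨hv, hfv⟩, rfl⟩
  have hd' : dist v y < δ := C.sm (hj (subset_closure hv)) (hj hy)
  exact step1 v (br v y) hv hfv (ccell_br L C (subset_closure hv) hy) (L.brS _ _ hd')

theorem typA_dual_cell (p : M) : cell U S T p = cell S U T p := by
  unfold cell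
  congr 1
  ext x
  exact and_comm

theorem ccell_g (L : LocP f g S U δ br) (C : CovP f g S U δ br T E) {p q x y : M}
    (hx : x ∈ interior (closure (cell S U T p)))
    (hfx : f x ∈ interior (closure (cell S U T q)))
    (hy : y ∈ closure (cell S U T q)) (hs : U (f x) y) : g y ∈ closure (cell S U T p) := by
  have := ccell_f (p := q) (q := p) (x := f x) (y := y) L.dual (CovP.dual L C)
  simp only [typA_dual_cell, L.gf] at this
  exact this hfx hx hy hs

theorem dense_cells [Finite ι] (L : LocP f g S U δ br) (C : CovP f g S U δ br T E) :
    Dense {x | x ∈ cell S U T x} := by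
  have clA := fun jk : ι × ι => typA_closed L C jk.1 jk.2
  have clB := fun jk : ι × ι => typA_closed L.dual (CovP.dual L C) jk.1 jk.2
  have hden : ∀ F : Set M, IsClosed F → IsOpen (frontier F)ᶜ ∧ Dense (frontier F)ᶜ := fun F hF =>
    ⟨isClosed_frontier.isOpen_compl, interior_eq_empty_iff_dense_compl.1 (interior_frontier hF)⟩
  have dA : Dense (⋂ jk : ι × ι, (frontier (typA U T jk.1 jk.2))ᶜ) :=
    dense_iInter_of_isOpen (fun i => (hden _ (clA i)).1) (fun i => (hden _ (clA i)).2)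
  have dB : Dense (⋂ jk : ι × ι, (frontier (typA S T jk.1 jk.2))ᶜ) :=
    dense_iInter_of_isOpen (fun i => (hden _ (clB i)).1) (fun i => (hden _ (clB i)).2)
  have oA : IsOpen (⋂ jk : ι × ι, (frontier (typA U T jk.1 jk.2))ᶜ) :=
    isOpen_iInter_of_finite (fun i => (hden _ (clA i)).1)
  refine (dA.inter_of_isOpen_left dB oA).mono ?_
  rintro x ⟨hA, hB⟩
  simp only [mem_iInter] at hA hB
  have ev : ∀ F : Set M, IsClosed F → x ∈ (frontier F)ᶜ → ∀ᶠ y in 𝓝 x, (y ∈ F ↔ x ∈ F) := by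
    intro F hF hx
    by_cases hxF : x ∈ F
    · have : x ∈ interior F := by
        by_contra hn
        exact hx ⟨subset_closure hxF, hn⟩
      filter_upwards [mem_interior_iff_mem_nhds.1 this] with y hy
      simp [hxF, hy]
    · filter_upwards [hF.isOpen_compl.mem_nhds hxF] with y hy
      simp only [hxF, iff_false]; exact hy
  change x ∈ cell S U T x
  rw [cell_nhds]
  have e1 := eventually_all.2 (fun jk => ev _ (clA jk) (hA jk))
  have e2 := eventually_all.2 (fun jk => ev _ (clB jk) (hB jk))
  filter_upwards [e1, e2] with y h1 h2
  exact ⟨fun j k => h1 (j, k), fun j k => h2 (j, k)⟩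

theorem cell_congr {p q : M} (h : eqv S U T p q) : cell S U T p = cell S U T q := by
  unfold cell
  congr 1
  ext x
  exact ⟨fun hx => hx.trans' h, fun hx => hx.trans' h.symm'⟩

theorem finite_cells [Finite ι] : (range (cell S U T)).Finite := by
  have : Finite ((ι → ι → Prop) × (ι → ι → Prop)) := inferInstance
  let c : M → (ι → ι → Prop) × (ι → ι → Prop) := fun x =>
    (fun j k => x ∈ typA U T j k, fun j k => x ∈ typA S T j k)
  have hfac : Function.FactorsThrough (cell S U T) c := by
    intro x y hxy
    apply cell_congr
    simp only [c, Prod.mk.injEq] at hxy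
    exact ⟨fun j k => iff_of_eq (congrFun (congrFun hxy.1 j) k),
      fun j k => iff_of_eq (congrFun (congrFun hxy.2 j) k)⟩
  have e : range (cell S U T) ⊆ range (Function.extend c (cell S U T) (fun _ => ∅)) := by
    rintro _ ⟨x, rfl⟩
    exact ⟨c x, hfac.extend_apply _ _⟩
  exact (finite_range _).subset e

end abs

theorem loc_exists (f : Equiv.Perm M) (hf : Continuous ⇑f) (hf' : Continuous ⇑f.symm)
    (ρ ε : ℝ) (hε : 0 < ε) (hερ : 4 * ε = ρ) (hexp : IsExpansiveWith f ρ)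
    (hsh : HasShadowing f) :
    ∃ (δ : ℝ) (br : M → M → M), 0 < δ ∧ δ ≤ ε ∧
      LocP f f.symm (fun x y => y ∈ epsStable f ε x) (fun x y => y ∈ epsUnstable f ε x) δ br := by
  classical
  have hcont : ∀ n : ℤ, Continuous ⇑(f ^ n) := by
    intro n
    induction n using Int.induction_on with
    | zero => simpa using continuous_id
    | succ n ih =>
      rw [zpow_add_one, Equiv.Perm.coe_mul]
      exact ih.comp hf
    | pred n ih =>
      rw [zpow_sub_one, Equiv.Perm.coe_mul]
      exact ih.comp hf'
  have key : ∀ x y : M, (∀ n : ℤ, 0 ≤ n → dist ((f ^ n) x) ((f ^ n) y) ≤ ρ) →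
      (∀ n : ℤ, n ≤ 0 → dist ((f ^ n) x) ((f ^ n) y) ≤ ρ) → x = y := by
    intro x y h1 h2
    exact hexp x y fun n => (le_total 0 n).elim (h1 n) (h2 n)
  obtain ⟨δ₁, hδ₁, hS⟩ := hsh (ε / 2) (by linarith)
  have ex : ∀ x y : M, dist x y < min δ₁ (ε / 2) →
      ∃ z, z ∈ epsStable f ε x ∧ y ∈ epsUnstable f ε z := by
    intro x y hxy
    have hxy1 := hxy.trans_le (min_le_left _ _)
    have hxy2 := hxy.trans_le (min_le_right _ _)
    obtain ⟨z, hz⟩ := hS (fun n => if 0 ≤ n then (f ^ n) x else (f ^ n) y) (by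
      intro n
      have e : ∀ w : M, f ((f ^ n) w) = (f ^ (n + 1)) w := by
        intro w
        rw [add_comm, zpow_one_add, Equiv.Perm.mul_apply]
      by_cases h0 : 0 ≤ n
      · have h1 : 0 ≤ n + 1 := by omega
        simp only [h0, h1, if_true, e, dist_self, hδ₁]
      · by_cases h1 : 0 ≤ n + 1
        · have h2 : n = -1 := by omega
          subst h2

          simpa [dist_comm] using hxy1
        · simp only [h0, h1, if_false, e, dist_self, hδ₁])
    refine ⟨z, fun n hn => ?_, fun n hn => ?_⟩
    · have := hz n
      simp only [hn, if_true] at this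
      rw [dist_comm]; linarith
    · have := hz n
      by_cases h0 : 0 ≤ n
      · have h2 : n = 0 := by omega
        subst h2
        simp only [le_refl, if_true, zpow_zero, Equiv.Perm.one_apply] at this ⊢
        have := dist_triangle z x y
        linarith
      · simp only [h0, if_false] at this
        linarith
  choose! br hbrS hbrU using ex
  have uniq : ∀ x y z, dist x y < min δ₁ (ε / 2) → z ∈ epsStable f ε x → y ∈ epsUnstable f ε z →
      z = br x y := by
    intro x y z hd h1 h2
    apply key
    · intro n hn
      have a := h1 n hn
      have b := hbrS x y hd n hn
      have := dist_triangle_left ((f ^ n) z) ((f ^ n) (br x y)) ((f ^ n) x)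
      linarith
    · intro n hn
      have a := h2 n hn
      have b := hbrU x y hd n hn
      have := dist_triangle_right ((f ^ n) z) ((f ^ n) (br x y)) ((f ^ n) y)
      linarith
  have Scl : IsClosed {p : M × M | p.2 ∈ epsStable f ε p.1} := by
    have : {p : M × M | p.2 ∈ epsStable f ε p.1} =
        ⋂ n : ℤ, ⋂ _ : 0 ≤ n, {p : M × M | dist ((f ^ n) p.1) ((f ^ n) p.2) ≤ ε} := by
      ext p; simp [epsStable]
    rw [this]
    exact isClosed_iInter fun n => isClosed_iInter fun _ => isClosed_le
      (((hcont n).comp continuous_fst).dist ((hcont n).comp continuous_snd)) continuous_const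
  have Ucl : IsClosed {p : M × M | p.2 ∈ epsUnstable f ε p.1} := by
    have : {p : M × M | p.2 ∈ epsUnstable f ε p.1} =
        ⋂ n : ℤ, ⋂ _ : n ≤ 0, {p : M × M | dist ((f ^ n) p.1) ((f ^ n) p.2) ≤ ε} := by
      ext p; simp [epsUnstable]
    rw [this]
    exact isClosed_iInter fun n => isClosed_iInter fun _ => isClosed_le
      (((hcont n).comp continuous_fst).dist ((hcont n).comp continuous_snd)) continuous_const
  have stepf : ∀ (n : ℤ) (w : M), (f ^ n) (f w) = (f ^ (n + 1)) w := by
    intro n w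
    rw [zpow_add_one, Equiv.Perm.mul_apply]
  have stepg : ∀ (n : ℤ) (w : M), (f ^ n) (f.symm w) = (f ^ (n - 1)) w := by
    intro n w
    rw [zpow_sub_one, Equiv.Perm.mul_apply]; rfl
  have hδε : min δ₁ (ε / 2) ≤ ε := (min_le_right _ _).trans (by linarith)
  refine ⟨min δ₁ (ε / 2), br, lt_min hδ₁ (by linarith), hδε, ?_⟩
  have Ssymm : ∀ x y, y ∈ epsStable f ε x → x ∈ epsStable f ε y := fun x y h n hn => by
    rw [dist_comm]; exact h n hn
  have Usymm : ∀ x y, y ∈ epsUnstable f ε x → x ∈ epsUnstable f ε y := fun x y h n hn => by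
    rw [dist_comm]; exact h n hn
  refine
  { cf := hf
    cg := hf'
    gf := fun x => by simp
    fg := fun x => by simp
    Srefl := fun x n hn => by simpa using hε.le
    Urefl := fun x n hn => by simpa using hε.le
    Ssymm := Ssymm
    Usymm := Usymm
    Strans := ?_
    Utrans := ?_
    brS := hbrS
    brU := hbrU
    uniq := uniq
    cont := ?_
    Scl := Scl
    Ucl := Ucl
    Sf := ?_
    Ug := ?_
    Sg := ?_
    Uf := ?_ }
  · intro x y z hd h1 h2
    have e : br x z = z := by
      apply key
      · intro n hn
        have a := h1 n hn
        have b := h2 n hn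
        have c := hbrS x z hd n hn
        rw [dist_comm] at c
        have := dist_triangle4 ((f ^ n) (br x z)) ((f ^ n) x) ((f ^ n) y) ((f ^ n) z)
        linarith
      · intro n hn
        have := hbrU x z hd n hn
        linarith
    have := hbrS x z hd
    rwa [e] at this
  · intro x y z hd h1 h2
    have hd' : dist z x < min δ₁ (ε / 2) := by rwa [dist_comm]
    have e : br z x = z := by
      apply key
      · intro n hn
        have := hbrS z x hd' n hn
        rw [dist_comm] at this
        linarith
      · intro n hn
        have a := h1 n hn
        have b := h2 n hn
        have c := hbrU z x hd' n hn
        have := dist_triangle4 ((f ^ n) (br z x)) ((f ^ n) x) ((f ^ n) y) ((f ^ n) z)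
        linarith
    have := hbrU z x hd'
    rw [e] at this
    exact Usymm _ _ this
  · intro x y hd
    refine le_nhds_of_unique_clusterPt fun z hz => ?_
    obtain ⟨u, hu, hut⟩ := mapClusterPt_iff_ultrafilter.1 hz
    have hev : ∀ᶠ p : M × M in (u : Filter (M × M)), dist p.1 p.2 < min δ₁ (ε / 2) :=
      hu (continuous_dist.continuousAt.eventually_lt_const hd)
    have t1 : Tendsto (fun p : M × M => p.1) u (𝓝 x) := (continuous_fst.tendsto (x, y)).mono_left hu
    have t2 : Tendsto (fun p : M × M => p.2) u (𝓝 y) := (continuous_snd.tendsto (x, y)).mono_left hu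
    refine uniq x y z hd ?_ ?_
    · exact Scl.mem_of_tendsto (t1.prodMk_nhds hut) (hev.mono fun p hp => hbrS _ _ hp)
    · exact Ucl.mem_of_tendsto (hut.prodMk_nhds t2) (hev.mono fun p hp => hbrU _ _ hp)
  · intro x y h n hn
    rw [stepf, stepf]
    exact h _ (by omega)
  · intro x y h n hn
    rw [stepg, stepg]
    exact h _ (by omega)
  · intro x y h hd n hn
    rcases hn.eq_or_lt with rfl | hn
    · simpa using hd.le.trans hδε
    · rw [stepg, stepg]
      exact h _ (by omega)
  · intro x y h hd n hn
    rcases hn.eq_or_lt with rfl | hn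
    · simpa using hd.le.trans hδε
    · rw [stepf, stepf]
      exact h _ (by omega)

theorem cov_exists (f : Equiv.Perm M) (hf : Continuous ⇑f) (hf' : Continuous ⇑f.symm)
    (ε δ η : ℝ) (br : M → M → M) (hδε : δ ≤ ε) (hη : 0 < η) (hηδ : 4 * η < δ)
    (hsh : HasShadowing f)
    (L : LocP f f.symm (fun x y => y ∈ epsStable f ε x) (fun x y => y ∈ epsUnstable f ε x) δ br) :
    ∃ (P : Set M) (T : P → Set M) (E : P → P → Set M), P.Finite ∧
      (∀ i, ∀ x ∈ T i, ∀ y ∈ T i, dist x y ≤ 2 * η) ∧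
      CovP f f.symm (fun x y => y ∈ epsStable f ε x) (fun x y => y ∈ epsUnstable f ε x) δ br T E := by
  classical
  have hcont : ∀ n : ℤ, Continuous ⇑(f ^ n) := by
    intro n
    induction n using Int.induction_on with
    | zero => simpa using continuous_id
    | succ n ih =>
      rw [zpow_add_one, Equiv.Perm.coe_mul]
      exact ih.comp hf
    | pred n ih =>
      rw [zpow_sub_one, Equiv.Perm.coe_mul]
      exact ih.comp hf'
  have stepf : ∀ (n : ℤ) (w : M), (f ^ n) (f w) = (f ^ (n + 1)) w := by
    intro n w
    rw [zpow_add_one, Equiv.Perm.mul_apply]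
  have stepf' : ∀ (n : ℤ) (w : M), f ((f ^ n) w) = (f ^ (n + 1)) w := by
    intro n w
    rw [add_comm, zpow_one_add, Equiv.Perm.mul_apply]
  obtain ⟨α, hα, hS⟩ := hsh η hη
  obtain ⟨γ₀, hγ₀, hγf⟩ := Metric.uniformContinuous_iff.1
    (CompactSpace.uniformContinuous_of_continuous hf) (α / 2) (by linarith)
  set γ := min γ₀ (min (α / 2) η) with hγdef
  have hγ : 0 < γ := lt_min hγ₀ (lt_min (by linarith) hη)
  obtain ⟨P, -, hPfin, hPc⟩ := finite_cover_balls_of_compact (isCompact_univ (X := M)) hγ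
  have near : ∀ x : M, ∃ p : P, dist x p < γ := by
    intro x
    have := hPc (mem_univ x)
    simp only [mem_iUnion, mem_ball] at this
    obtain ⟨p, hp, h⟩ := this
    exact ⟨⟨p, hp⟩, h⟩
  haveI : Finite P := hPfin
  let Sh : M → (ℤ → P) → Prop := fun x q =>
    (∀ n, dist (f (q n)) (q (n + 1)) < α) ∧ ∀ n, dist ((f ^ n) x) (q n) ≤ η
  let T : P → Set M := fun i => {x | ∃ q, Sh x q ∧ q 0 = i}
  let E : P → P → Set M := fun i j => {x | ∃ q, Sh x q ∧ q 0 = i ∧ q 1 = j}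
  have total : ∀ x, ∃ q, Sh x q := by
    intro x
    choose c hc using near
    refine ⟨fun n => c ((f ^ n) x), fun n => ?_, fun n => ?_⟩
    · have h1 := hc ((f ^ n) x)
      have h2 := hc ((f ^ (n + 1)) x)
      have h3 := hγf (h1.trans_le (min_le_left _ _))
      rw [stepf', dist_comm] at h3
      have h4 : γ ≤ α / 2 := (min_le_right _ _).trans (min_le_left _ _)
      have := dist_triangle (f (c ((f ^ n) x))) ((f ^ (n + 1)) x) (c ((f ^ (n + 1)) x))
      linarith
    · have h4 : γ ≤ η := (min_le_right _ _).trans (min_le_right _ _)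
      exact ((hc _).le).trans h4
  have shift : ∀ x q, Sh x q → Sh (f x) (fun n => q (n + 1)) := by
    rintro x q ⟨h1, h2⟩
    refine ⟨fun n => h1 (n + 1), fun n => ?_⟩
    rw [stepf]; exact h2 (n + 1)
  have shift' : ∀ x q, Sh (f x) q → Sh x (fun n => q (n - 1)) := by
    rintro x q ⟨h1, h2⟩
    refine ⟨fun n => ?_, fun n => ?_⟩
    · have := h1 (n - 1)
      rwa [show n - 1 + 1 = n + 1 - 1 by ring] at this
    · have := h2 (n - 1)
      rwa [stepf, sub_add_cancel] at this
  have close : ∀ i, ∀ x ∈ T i, ∀ y ∈ T i, dist x y ≤ 2 * η := by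
    rintro i x ⟨q, hq, hq0⟩ y ⟨q', hq', hq'0⟩
    have h1 := hq.2 0
    have h2 := hq'.2 0
    simp only [zpow_zero, Equiv.Perm.one_apply, hq0, hq'0] at h1 h2
    have := dist_triangle_right x y (i : M)
    linarith
  have splice : ∀ x y q q', Sh x q → Sh y q' → q 0 = q' 0 →
      ∃ r, Sh (br x y) r ∧ (∀ n, 0 ≤ n → r n = q n) ∧ (∀ n, n ≤ 0 → r n = q' n) := by
    intro x y q q' hq hq' h0
    have hd : dist x y < δ := by
      have := close (q 0) x ⟨q, hq, rfl⟩ y ⟨q', hq', h0.symm⟩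
      linarith
    let r : ℤ → P := fun n => if 0 ≤ n then q n else q' n
    have r1 : ∀ n, 0 ≤ n → r n = q n := fun n hn => by simp [r, hn]
    have r2 : ∀ n, n ≤ 0 → r n = q' n := fun n hn => by
      rcases hn.eq_or_lt with rfl | hn
      · simp [r, h0]
      · simp [r, not_le.2 hn]
    have hr : ∀ n, dist (f (r n)) (r (n + 1)) < α := by
      intro n
      by_cases hn : 0 ≤ n
      · rw [r1 n hn, r1 (n + 1) (by omega)]; exact hq.1 n
      · rw [r2 n (by omega), r2 (n + 1) (by omega)]; exact hq'.1 n
    obtain ⟨z, hz⟩ := hS (fun n => (r n : M)) hr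
    have hzb : z = br x y := by
      apply L.uniq x y z hd
      · intro n hn
        have a := hz n
        have b := hq.2 n
        simp only [r1 n hn] at a
        have := dist_triangle_right ((f ^ n) x) ((f ^ n) z) (q n : M)
        linarith
      · intro n hn
        have a := hz n
        have b := hq'.2 n
        simp only [r2 n hn] at a
        have := dist_triangle_right ((f ^ n) z) ((f ^ n) y) (q' n : M)
        linarith
    exact ⟨r, ⟨hr, by rw [← hzb]; exact hz⟩, r1, r2⟩
  refine ⟨P, T, E, hPfin, close, ?_⟩
  refine
  { Tcl := ?_
    cover := ?_
    small := fun i x hx y hy => by have := close i x hx y hy; linarith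
    rect := ?_
    memT := ?_
    memfT := ?_
    ES := ?_
    EU := ?_ }
  · intro i
    have hcl : IsClosed {p : M × (ℤ → P) | Sh p.1 p.2 ∧ p.2 0 = i} := by
      have c1 : IsClosed {p : M × (ℤ → P) | ∀ n, dist (f (p.2 n)) (p.2 (n + 1)) < α} := by
        simp only [setOf_forall]
        refine isClosed_iInter fun n => ?_
        have hcn : Continuous (fun p : M × (ℤ → P) => (p.2 n, p.2 (n + 1))) := by fun_prop
        exact (isClosed_discrete {w : P × P | dist (f w.1) (w.2 : M) < α}).preimage hcn
      have c2 : IsClosed {p : M × (ℤ → P) | ∀ n, dist ((f ^ n) p.1) (p.2 n) ≤ η} := by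
        simp only [setOf_forall]
        refine isClosed_iInter fun n => ?_
        have := hcont n
        exact isClosed_le (by fun_prop) continuous_const
      have c3 : IsClosed {p : M × (ℤ → P) | p.2 0 = i} :=
        isClosed_eq (by fun_prop) continuous_const
      exact (c1.inter c2).inter c3
    have := isClosedMap_fst_of_compactSpace _ hcl
    have e : T i = Prod.fst '' {p : M × (ℤ → P) | Sh p.1 p.2 ∧ p.2 0 = i} := by
      ext x
      constructor
      · rintro ⟨q, h⟩
        exact ⟨(x, q), h, rfl⟩
      · rintro ⟨⟨x', q⟩, h, rfl⟩
        exact ⟨q, h⟩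
    rw [e]; exact this
  · intro x
    obtain ⟨q, hq⟩ := total x
    exact ⟨q 0, q, hq, rfl⟩
  · rintro i x ⟨q, hq, hq0⟩ y ⟨q', hq', hq'0⟩
    obtain ⟨r, hr, r1, -⟩ := splice x y q q' hq hq' (hq0.trans hq'0.symm)
    exact ⟨r, hr, (r1 0 le_rfl).trans hq0⟩
  · intro i x
    constructor
    · rintro ⟨q, hq, h0⟩
      exact ⟨q 1, q, hq, h0, rfl⟩
    · rintro ⟨j, q, hq, h0, -⟩
      exact ⟨q, hq, h0⟩
  · intro j x
    constructor
    · rintro ⟨q, hq, h0⟩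
      exact ⟨q (-1), _, shift' x q hq, by simp, by simpa using h0⟩
    · rintro ⟨i, q, hq, -, h1⟩
      exact ⟨_, shift x q hq, by simpa using h1⟩
  · rintro i j x y ⟨q, hq, h0, h1⟩ ⟨q', hq', h0'⟩ hs
    obtain ⟨r, hr, r1, -⟩ := splice x y q q' hq hq' (h0.trans h0'.symm)
    have hd : dist x y < δ := by
      have := close i x ⟨q, hq, h0⟩ y ⟨q', hq', h0'⟩
      linarith
    have e : y = br x y := L.uniq x y y hd hs (L.Urefl y)
    rw [← e] at hr
    exact ⟨r, hr, (r1 0 le_rfl).trans h0, (r1 1 (by omega)).trans h1⟩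
  · rintro i j x y ⟨q, hq, h0, h1⟩ ⟨q', hq', h0'⟩ hu
    have hqs := shift x q hq
    have h1' : q (0 + 1) = j := by simpa using h1
    obtain ⟨r, hr, r1, r2⟩ := splice (f y) (f x) q' _ hq' hqs (h0'.trans h1'.symm)
    have hd : dist (f y) (f x) < δ := by
      have := close j (f y) ⟨q', hq', h0'⟩ (f x) ⟨_, hqs, h1'⟩
      linarith
    have e : f y = br (f y) (f x) := L.uniq _ _ _ hd (L.Srefl _) (L.Usymm _ _ hu)
    rw [← e] at hr
    refine ⟨_, shift' y r hr, ?_, ?_⟩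
    · have := r2 (0 - 1) (by omega)
      simpa [h0] using this
    · have := r1 (1 - 1) (by omega)
      simpa [h0'] using this

/-- Sinai's theorem, general form: if `f` is an expansive homeomorphism of the
compact metric space `M` with expansivity constant `ρ` having the shadowing property, then for
every `β > 0` there are `0 < ε ≤ ρ/4`, `δ > 0` with a well-defined bracket, together with a
Markov partition of `M` for `f` whose pieces have diameter less than `β`. -/
theorem stmt_17 (f : Equiv.Perm M) (hf : Continuous ⇑f) (hf' : Continuous ⇑f.symm)
    (ρ : ℝ) (hρ : 0 < ρ) (hexp : IsExpansiveWith f ρ) (hsh : HasShadowing f) :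
    ∀ β : ℝ, 0 < β →
      ∃ (ε δ : ℝ) (br : M → M → M) (m : ℕ) (R : Fin m → Set M),
        0 < ε ∧ ε ≤ ρ / 4 ∧ 0 < δ ∧
        (∀ x y : M, dist x y < δ → epsStable f ε x ∩ epsUnstable f ε y = {br x y}) ∧
        IsMarkovPartition f ε δ br R ∧
        ∀ i, Metric.diam (R i) < β := by
  classical
  intro β hβ
  obtain ⟨δ, br, hδ, hδε, L⟩ := loc_exists f hf hf' ρ (ρ / 4) (by linarith) (by ring) hexp hsh
  set ε := ρ / 4 with hε
  obtain ⟨η, hη, hη1, hη2⟩ : ∃ η : ℝ, 0 < η ∧ 4 * η < δ ∧ 4 * η < β :=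
    ⟨min δ β / 8, by have := lt_min hδ hβ; linarith,
      by have := min_le_left δ β; linarith, by have := min_le_right δ β; linarith⟩
  obtain ⟨P, T, E, hP, hT, C⟩ := cov_exists f hf hf' ε δ η br hδε hη hη1 hsh L
  haveI : Finite P := hP
  set S : M → M → Prop := fun x y => y ∈ epsStable f ε x with hSdef
  set U : M → M → Prop := fun x y => y ∈ epsUnstable f ε x with hUdef
  have hfin : {c : Set M | c ∈ range (cell S U T) ∧ c.Nonempty}.Finite :=
    finite_cells.subset fun c hc => hc.1
  haveI : Finite {c : Set M | c ∈ range (cell S U T) ∧ c.Nonempty} := hfin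
  obtain ⟨m, ⟨e⟩⟩ := Finite.exists_equiv_fin {c : Set M | c ∈ range (cell S U T) ∧ c.Nonempty}
  have hp : ∀ i : Fin m, ∃ p, cell S U T p = (e.symm i : Set M) := fun i => (e.symm i).2.1
  choose p hp using hp
  have hne : ∀ i, (cell S U T (p i)).Nonempty := fun i => by rw [hp]; exact (e.symm i).2.2
  have hdiam : ∀ i, Metric.diam (closure (cell S U T (p i))) ≤ 2 * η := by
    intro i
    obtain ⟨j, hj⟩ := ccell_T L C (p i)
    exact Metric.diam_le_of_forall_dist_le (by linarith)
      fun x hx y hy => hT j x (hj hx) y (hj hy)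
  refine ⟨ε, δ, br, m, fun i => closure (cell S U T (p i)), by linarith, le_rfl, hδ, ?_,
    ⟨?_, ?_, ?_, ?_, ?_⟩, fun i => by have := hdiam i; linarith⟩
  · intro x y hd
    ext z
    simp only [mem_inter_iff, mem_singleton_iff]
    constructor
    · rintro ⟨h1, h2⟩
      exact L.uniq x y z hd h1 (L.Usymm _ _ h2)
    · rintro rfl
      exact ⟨L.brS x y hd, L.Usymm _ _ (L.brU x y hd)⟩
  · intro i
    exact ⟨(hne i).closure, by have := hdiam i; linarith, fun x hx y hy => ccell_br L C hx hy⟩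
  · intro i
    refine Subset.antisymm (closure_mono ?_) ?_
    · exact interior_maximal subset_closure (cell_open _)
    · exact closure_minimal interior_subset isClosed_closure
  · have hcl : IsClosed (⋃ i, closure (cell S U T (p i))) :=
      isClosed_iUnion_of_finite fun i => isClosed_closure
    have hsub : {x | x ∈ cell S U T x} ⊆ ⋃ i, closure (cell S U T (p i)) := by
      intro x hx
      refine mem_iUnion.2 ⟨e ⟨cell S U T x, ⟨x, rfl⟩, ⟨x, hx⟩⟩, ?_⟩
      rw [hp, Equiv.symm_apply_apply]
      exact subset_closure hx
    have := closure_minimal hsub hcl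
    rw [(dense_cells L C).closure_eq] at this
    exact univ_subset_iff.1 this
  · intro i j hij
    by_contra hcon
    obtain ⟨x, hxi, hxj⟩ := nonempty_iff_ne_empty.2 hcon
    obtain ⟨a, ⟨hai, haj⟩, ha⟩ := _root_.mem_closure_iff.1 (interior_subset hxi) _
      (isOpen_interior.inter isOpen_interior) ⟨hxi, hxj⟩
    obtain ⟨b, hbi, hbj⟩ := _root_.mem_closure_iff.1 (interior_subset haj) _
      (cell_open (p i)) ha
    have := cell_congr ((cell_eqv hbi).symm'.trans' (cell_eqv hbj))
    rw [hp, hp] at this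
    exact hij (e.symm.injective (Subtype.ext this))
  · rintro i j x ⟨hxi, hxj⟩
    constructor
    · rintro _ ⟨y, ⟨hy1, hy2⟩, rfl⟩
      exact ⟨L.Sf _ _ hy1, ccell_f L C hxi hxj hy2 hy1⟩
    · rintro y ⟨hy1, hy2⟩
      refine ⟨f.symm y, ⟨?_, ccell_g L C hxi hxj hy2 hy1⟩, by simp⟩
      have := L.Ug _ _ hy1
      rwa [L.gf] at this
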